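/- Let N ≥ 1, let 𝒴₀, …, 𝒴_{N−1} be ℂ-linear subspaces of the p₂×q₂ complex matrices, and let T1 : 𝕋 → Matrix q₁ p₁ ℂ, T2 : 𝕋 → Matrix q₁ p₂ ℂ, T3 : 𝕋 → Matrix q₂ p₁ ℂ be continuous. Suppose U_i inner continuous in H∞ and U_o continuous in H∞, pointwise invertible with inverse in H∞, with T2 = U_i·U_o pointwise; define Y := (I − U_iU_i^∼)T1. Suppose for every γ > ‖Y‖∞ we are given: Y_{o,γ} continuous pointwise invertible with Y_{o,γ}, Y_{o,γ}⁻¹ ∈ H∞ and Y_{o,γ}ᴴY_{o,γ} = γ²·I − YᴴY pointwise; V_{ci,γ} continuous co-inner in H∞ and V_{co,γ} continuous pointwise invertible with V_{co,γ}, V_{co,γ}⁻¹ ∈ H∞ and T3·Y_{o,γ}⁻¹ = V_{co,γ}·V_{ci,γ}; and, whenever Z_γ := U_i^∼·T1·Y_{o,γ}⁻¹·(I − V_{ci,γ}^∼V_{ci,γ}) satisfies ‖Z_γ‖∞ < 1, a continuous pointwise-invertible Z_{co,γ} with Z_{co,γ}, Z_{co,γ}⁻¹ ∈ H∞ and Z_{co,γ}·Z_{co,γ}^∼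 = I − Z_γ·Z_γ^∼ pointwise. Set R_γ := Z_{co,γ}⁻¹·U_i^∼·T1·Y_{o,γ}⁻¹·V_{ci,γ}^∼, and for V(z) := Σ_{i=0}^{N−1} V_i·z^{−i} set R̂_γ(V)(z) := z^N·R_γ(z) − Z_{co,γ}(z)⁻¹·U_o(z)·(z^N·V(z))·V_{co,γ}(z). Then inf{‖T1 − T2·(V + z^{−N}·D)·T3‖∞ : V_i ∈ 𝒴_i for all i, D : 𝕋 → Matrix p₂ q₂ ℂ continuous with D ∈ H∞} = inf{γ : γ > ‖Y‖∞, ‖Z_γ‖∞ < 1, and there exist V₀ ∈ 𝒴₀, …, V_{N−1} ∈ 𝒴_{N−1} with dist(R̂_γ(V), H∞) < 1}. -/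

import Mathlib

open Matrix

/-- The spectral norm (ℓ²→ℓ² operator norm, largest singular value) of a complex matrix. -/
noncomputable def specNorm {m n : Type*} [Fintype m] [Fintype n] [DecidableEq n]
    (M : Matrix m n ℂ) : ℝ :=
  ‖LinearMap.toContinuousLinearMap (Matrix.toEuclideanLin M)‖

/-- The `H∞` norm of a matrix-valued function on the unit circle:
`‖F‖∞ = sup_{z ∈ 𝕋} ‖F(z)‖`. -/
noncomputable def hinfNorm {m n : Type*} [Fintype m] [Fintype n] [DecidableEq n]
    (F : Circle → Matrix m n ℂ) : ℝ :=
  ⨆ z : Circle, specNorm (F z)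

/-- A matrix-valued function `F` on the unit circle belongs to `H∞` if there is a
matrix-valued function `G`, continuous on the closed unit disc and analytic on the open
unit disc, with `F(z) = G(z⁻¹)` for all `z` on the circle. -/
def MemHInf {m n : Type*} (F : Circle → Matrix m n ℂ) : Prop :=
  ∃ G : ℂ → Matrix m n ℂ,
    (∀ i j, ContinuousOn (fun w => G w i j) (Metric.closedBall (0 : ℂ) 1)) ∧
    (∀ i j, AnalyticOn ℂ (fun w => G w i j) (Metric.ball (0 : ℂ) 1)) ∧
    (∀ z : Circle, F z = G ((z : ℂ)⁻¹))

/-- The distance from `R` to `H∞` in the `‖·‖∞` norm: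
`dist(R, H∞) = inf { ‖R − X‖∞ : X continuous, X ∈ H∞ }`. -/
noncomputable def distHInf {m n : Type*} [Fintype m] [Fintype n] [DecidableEq n]
    (R : Circle → Matrix m n ℂ) : ℝ :=
  sInf {c : ℝ | ∃ X : Circle → Matrix m n ℂ,
    Continuous X ∧ MemHInf X ∧ c = hinfNorm fun z => R z - X z}

/-!
Write `E = T1 - T2 Q T3` with `T2 = Ui Uo`. As `Ui` is inner, `E` splits orthogonally along the
range of `Ui`, giving `EᴴE = YᴴY + BᴴB` with `B = Uiᴴ T1 - Uo Q T3`. So `‖E‖ < γ` means that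
`γ² - YᴴY - BᴴB` is positive definite, and the congruence by `Yo⁻¹` turns this into
`‖B Yo⁻¹‖ < 1`. Since `B Yo⁻¹ = Uiᴴ T1 Yo⁻¹ - Uo Q Vco Vci` with `Vci` co-inner, the adjoint form
of the same argument removes `Z` and leaves `‖Zco⁻¹ (Uiᴴ T1 Yo⁻¹ Vciᴴ - Uo Q Vco)‖ < 1`.
Multiplying by the unimodular `z ^ N` makes the free parameter enter as `Zco⁻¹ Uo D Vco`, which
ranges over all of `H∞` because the outer factors are units of `H∞`. Hence the levels `γ` on the
right-hand side are exactly those strictly above some attained cost, which gives equal infima.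
-/

theorem csInf_setOf_exists_mem_lt {α : Type*} [ConditionallyCompleteLinearOrder α]
    [DenselyOrdered α] [NoMaxOrder α] {s : Set α} (hs : s.Nonempty) (hbdd : BddBelow s) :
    sInf {b | ∃ a ∈ s, a < b} = sInf s := by
  have hIoi : {b | ∃ a ∈ s, a < b} = ⋃ a ∈ s, Set.Ioi a := by ext; simp
  rw [hIoi, (isGLB_csInf hs hbdd).biUnion_Ioi_eq, csInf_Ioi]

theorem norm_lt_iff_isStrictlyPositive_algebraMap_sub {A : Type*} [CStarAlgebra A]
    [PartialOrder A] [StarOrderedRing A] {a : A} (ha : 0 ≤ a) {r : ℝ} (hr : 0 < r) :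
    ‖a‖ < r ↔ IsStrictlyPositive (algebraMap ℝ A r - a) := by
  rw [StarOrderedRing.isStrictlyPositive_iff_spectrum_pos (R := ℝ) _ (by cfc_tac),
    ← spectrum.singleton_sub_eq]
  simp only [Set.singleton_sub, Set.forall_mem_image, sub_pos]
  obtain _ | _ := subsingleton_or_nontrivial A
  · simp [Subsingleton.elim a 0, hr]
  · exact ⟨fun h x hx ↦
      ((Real.le_norm_self x).trans (spectrum.norm_le_norm_of_mem hx)).trans_lt h,
      fun h ↦ h (CStarAlgebra.norm_mem_spectrum_of_nonneg ha)⟩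

theorem continuous_matrix_inv {X n 𝕜 : Type*} [TopologicalSpace X] [Fintype n] [DecidableEq n]
    [NormedField 𝕜] {F : X → Matrix n n 𝕜} (hF : Continuous F) (hF_unit : ∀ x, IsUnit (F x)) :
    Continuous fun x ↦ (F x)⁻¹ := by
  simp_rw [inv_def, Ring.inverse_eq_inv']
  exact (hF.matrix_det.inv₀ fun x ↦ ((isUnit_iff_isUnit_det _).1 (hF_unit x)).ne_zero).smul
    hF.matrix_adjugate

section SpectralNorm

variable {m n k : Type*} [Fintype m] [Fintype k]

section

variable [Fintype n] [DecidableEq n]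

open scoped Matrix.Norms.L2Operator in
theorem specNorm_eq_norm (M : Matrix m n ℂ) : specNorm M = ‖M‖ := rfl

theorem specNorm_nonneg (M : Matrix m n ℂ) : 0 ≤ specNorm M :=
  norm_nonneg _

open scoped Matrix.Norms.L2Operator in
theorem continuous_specNorm : Continuous (specNorm : Matrix m n ℂ → ℝ) :=
  continuous_norm

open scoped Matrix.Norms.L2Operator in
theorem specNorm_smul_of_norm_eq_one {a : ℂ} (ha : ‖a‖ = 1) (M : Matrix m n ℂ) :
    specNorm (a • M) = specNorm M := by
  rw [specNorm_eq_norm, norm_smul, ha, one_mul, specNorm_eq_norm]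

open scoped Matrix.Norms.L2Operator in
theorem specNorm_conjTranspose [DecidableEq m] (M : Matrix m n ℂ) : specNorm Mᴴ = specNorm M :=
  l2_opNorm_conjTranspose M

open scoped ComplexOrder MatrixOrder Matrix.Norms.L2Operator in
theorem specNorm_lt_iff_posDef (M : Matrix m n ℂ) {c : ℝ} (hc : 0 < c) :
    specNorm M < c ↔ ((c : ℂ) ^ 2 • (1 : Matrix n n ℂ) - Mᴴ * M).PosDef := by
  have hscalar : (c : ℂ) ^ 2 • (1 : Matrix n n ℂ) = algebraMap ℝ _ (c ^ 2) := by
    rw [Algebra.algebraMap_eq_smul_one, ← Complex.coe_smul, Complex.ofReal_pow]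
  rw [specNorm_eq_norm, ← sq_lt_sq₀ (norm_nonneg M) hc.le, sq, ← l2_opNorm_conjTranspose_mul_self,
    norm_lt_iff_isStrictlyPositive_algebraMap_sub (posSemidef_conjTranspose_mul_self M).nonneg
      (by positivity), isStrictlyPositive_iff_posDef, hscalar]

open scoped ComplexOrder in
theorem specNorm_mul_inv_lt_one_iff_posDef (B : Matrix m n ℂ) {G : Matrix n n ℂ}
    (hG : IsUnit G) : specNorm (B * G⁻¹) < 1 ↔ (Gᴴ * G - Bᴴ * B).PosDef := by
  have hBG : B * G⁻¹ * G = B := nonsing_inv_mul_cancel_right _ _ ((isUnit_iff_isUnit_det G).1 hG)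
  have hcongr : star G * (1 - (B * G⁻¹)ᴴ * (B * G⁻¹)) * G = Gᴴ * G - Bᴴ * B :=
    calc star G * (1 - (B * G⁻¹)ᴴ * (B * G⁻¹)) * G
        = Gᴴ * G - (B * G⁻¹ * G)ᴴ * (B * G⁻¹ * G) := by
          simp only [star_eq_conjTranspose, Matrix.mul_sub, Matrix.sub_mul, Matrix.mul_one,
            conjTranspose_mul, Matrix.mul_assoc]
      _ = Gᴴ * G - Bᴴ * B := by rw [hBG]
  rw [← hcongr, hG.posDef_star_left_conjugate_iff, specNorm_lt_iff_posDef _ one_pos]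
  simp

end

variable [DecidableEq m]

theorem isStarProjection_one_sub_mul_conjTranspose [DecidableEq k] {U : Matrix m k ℂ}
    (hU : Uᴴ * U = 1) : IsStarProjection (1 - U * Uᴴ) := by
  refine IsStarProjection.one_sub ⟨?_, by simp [IsSelfAdjoint, star_eq_conjTranspose]⟩
  rw [IsIdempotentElem, Matrix.mul_assoc, ← Matrix.mul_assoc Uᴴ, hU, Matrix.one_mul]

theorem one_sub_mul_conjTranspose_mul_self [DecidableEq k] {U : Matrix m k ℂ}
    (hU : Uᴴ * U = 1) : (1 - U * Uᴴ) * U = 0 := by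
  rw [Matrix.sub_mul, Matrix.mul_assoc, hU, Matrix.one_mul, Matrix.mul_one, sub_self]

variable [DecidableEq k]

theorem conjTranspose_mul_self_sub_mul {U : Matrix m k ℂ} (hU : Uᴴ * U = 1) (T : Matrix m n ℂ)
    (A : Matrix k n ℂ) :
    (T - U * A)ᴴ * (T - U * A) = ((1 - U * Uᴴ) * T)ᴴ * ((1 - U * Uᴴ) * T) +
      (Uᴴ * T - A)ᴴ * (Uᴴ * T - A) := by
  have hsplit : T - U * A = (1 - U * Uᴴ) * T + U * (Uᴴ * T - A) := by
    rw [Matrix.sub_mul, Matrix.mul_sub, Matrix.one_mul, Matrix.mul_assoc, sub_add_sub_cancel]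
  have horth : ((1 - U * Uᴴ) * T)ᴴ * (U * (Uᴴ * T - A)) = 0 := by
    rw [conjTranspose_mul, Matrix.mul_assoc, ← Matrix.mul_assoc _ U]
    simp [one_sub_mul_conjTranspose_mul_self hU]
  have horth' : (U * (Uᴴ * T - A))ᴴ * ((1 - U * Uᴴ) * T) = 0 := by
    simpa using congr(($horth)ᴴ)
  rw [hsplit, conjTranspose_add, Matrix.add_mul, Matrix.mul_add, Matrix.mul_add, horth, horth',
    add_zero, zero_add, conjTranspose_mul U, Matrix.mul_assoc, ← Matrix.mul_assoc Uᴴ, hU,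
    Matrix.one_mul]

variable [Fintype n]

open scoped Matrix.Norms.L2Operator in
theorem specNorm_one_sub_mul_le [DecidableEq n] {U : Matrix m k ℂ} (hU : Uᴴ * U = 1)
    (T : Matrix m n ℂ) (A : Matrix k n ℂ) :
    specNorm ((1 - U * Uᴴ) * T) ≤ specNorm (T - U * A) :=
  calc specNorm ((1 - U * Uᴴ) * T) = ‖(1 - U * Uᴴ) * (T - U * A)‖ := by
        rw [Matrix.mul_sub, ← Matrix.mul_assoc _ U, one_sub_mul_conjTranspose_mul_self hU,
          Matrix.zero_mul, sub_zero, specNorm_eq_norm]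
    _ ≤ ‖1 - U * Uᴴ‖ * ‖T - U * A‖ := l2_opNorm_mul _ _
    _ ≤ specNorm (T - U * A) :=
        mul_le_of_le_one_left (norm_nonneg _)
          (isStarProjection_one_sub_mul_conjTranspose hU).norm_le

theorem specNorm_sub_mul_lt_iff [DecidableEq n] {U : Matrix m k ℂ} (hU : Uᴴ * U = 1)
    (T : Matrix m n ℂ) (A : Matrix k n ℂ) {c : ℝ} (hc : 0 < c) {G : Matrix n n ℂ} (hG : IsUnit G)
    (hG_fact : Gᴴ * G = (c : ℂ) ^ 2 • (1 : Matrix n n ℂ) -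
      ((1 - U * Uᴴ) * T)ᴴ * ((1 - U * Uᴴ) * T)) :
    specNorm (T - U * A) < c ↔ specNorm ((Uᴴ * T - A) * G⁻¹) < 1 := by
  rw [specNorm_lt_iff_posDef _ hc, conjTranspose_mul_self_sub_mul hU, ← sub_sub, ← hG_fact,
    specNorm_mul_inv_lt_one_iff_posDef _ hG]

theorem specNorm_sub_mul_mul_lt_iff [DecidableEq n] {U : Matrix m k ℂ} (hU : Uᴴ * U = 1)
    (T : Matrix m n ℂ) {c : ℝ} (hc : 0 < c) {G : Matrix n n ℂ} (hG : IsUnit G)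
    (hG_fact : Gᴴ * G = (c : ℂ) ^ 2 • (1 : Matrix n n ℂ) -
      ((1 - U * Uᴴ) * T)ᴴ * ((1 - U * Uᴴ) * T))
    {j l : Type*} [Fintype j] [Fintype l] {S : Matrix l n ℂ} {W : Matrix l j ℂ} {V : Matrix j n ℂ}
    (hS : S * G⁻¹ = W * V) (Q : Matrix k l ℂ) :
    specNorm (T - U * Q * S) < c ↔ specNorm (Uᴴ * T * G⁻¹ - Q * W * V) < 1 := by
  rw [Matrix.mul_assoc U, specNorm_sub_mul_lt_iff hU T _ hc hG hG_fact, Matrix.sub_mul,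
    Matrix.mul_assoc Q, hS, Matrix.mul_assoc Q]

theorem specNorm_mul_one_sub_le {V : Matrix k m ℂ} (hV : V * Vᴴ = 1) (B : Matrix n m ℂ)
    (C : Matrix n k ℂ) : specNorm (B * (1 - Vᴴ * V)) ≤ specNorm (B - C * V) := by
  classical
  have h := specNorm_one_sub_mul_le (U := Vᴴ) (by simpa using hV) Bᴴ Cᴴ
  rw [← specNorm_conjTranspose (B * _), ← specNorm_conjTranspose (B - _)]
  simpa [conjTranspose_mul] using h

theorem specNorm_sub_mul_lt_one_iff [DecidableEq n] {V : Matrix k m ℂ} (hV : V * Vᴴ = 1)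
    (B : Matrix n m ℂ) (C : Matrix n k ℂ) {G : Matrix n n ℂ} (hG : IsUnit G)
    (hG_fact : G * Gᴴ = 1 - (B * (1 - Vᴴ * V)) * (B * (1 - Vᴴ * V))ᴴ) :
    specNorm (B - C * V) < 1 ↔ specNorm (G⁻¹ * (B * Vᴴ - C)) < 1 := by
  have h := specNorm_sub_mul_lt_iff (U := Vᴴ) (by simpa using hV) Bᴴ Cᴴ one_pos (G := Gᴴ)
    hG.star (by simpa [conjTranspose_mul] using hG_fact)
  rw [← specNorm_conjTranspose (B - _), ← specNorm_conjTranspose (G⁻¹ * _)]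
  simpa [conjTranspose_mul, conjTranspose_nonsing_inv] using h

end SpectralNorm

section HInf

variable {l m n : Type*}

theorem hinfNorm_nonneg [Fintype m] [Fintype n] [DecidableEq n] (F : Circle → Matrix m n ℂ) :
    0 ≤ hinfNorm F :=
  Real.iSup_nonneg fun z ↦ specNorm_nonneg (F z)

theorem hinfNorm_lt_iff [Fintype m] [Fintype n] [DecidableEq n] {F : Circle → Matrix m n ℂ}
    (hF : Continuous F) {c : ℝ} : hinfNorm F < c ↔ ∀ z, specNorm (F z) < c := by
  have h := isCompact_univ.sSup_lt_iff_of_continuous Set.univ_nonempty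
    (continuous_specNorm.comp hF).continuousOn c
  simpa [hinfNorm, Set.image_univ, sSup_range] using h

theorem hinfNorm_mono [Fintype l] [Fintype m] [DecidableEq m] [Fintype n] [DecidableEq n]
    {k : Type*} [Fintype k] {F : Circle → Matrix k m ℂ} {G : Circle → Matrix l n ℂ}
    (hG : Continuous G) (h : ∀ z, specNorm (F z) ≤ specNorm (G z)) : hinfNorm F ≤ hinfNorm G :=
  ciSup_mono (isCompact_range (continuous_specNorm.comp hG)).bddAbove h

theorem continuous_inv_coe_circle : Continuous fun z : Circle ↦ (z : ℂ)⁻¹ :=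
  Continuous.inv₀ (f := fun z : Circle ↦ (z : ℂ)) (by fun_prop) Circle.coe_ne_zero

theorem MemHInf.continuous {F : Circle → Matrix m n ℂ} (hF : MemHInf F) : Continuous F := by
  obtain ⟨G, hG, -, hFG⟩ := hF
  refine continuous_matrix fun i j ↦ ?_
  simp_rw [hFG]
  exact (hG i j).comp_continuous continuous_inv_coe_circle fun z ↦ by simp [Circle.norm_coe]

theorem memHInf_zero : MemHInf (0 : Circle → Matrix m n ℂ) :=
  ⟨0, fun _ _ ↦ continuousOn_const, fun _ _ ↦ analyticOn_const, fun _ ↦ rfl⟩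

theorem MemHInf.mul [Fintype m] {F : Circle → Matrix l m ℂ} {G : Circle → Matrix m n ℂ}
    (hF : MemHInf F) (hG : MemHInf G) : MemHInf fun z ↦ F z * G z := by
  obtain ⟨F', hF'c, hF'a, hF'⟩ := hF
  obtain ⟨G', hG'c, hG'a, hG'⟩ := hG
  refine ⟨fun w ↦ F' w * G' w, fun i j ↦ ?_, fun i j ↦ ?_, fun z ↦ by simp only [hF', hG']⟩
  · simp only [mul_apply]
    exact continuousOn_finsetSum _ fun k _ ↦ (hF'c i k).mul (hG'c k j)
  · simp only [mul_apply]
    exact Finset.analyticOn_fun_sum _ fun k _ ↦ (hF'a i k).mul (hG'a k j)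

/-- `F` is a unit of the algebra of square matrix functions in `H∞`: it is pointwise invertible
and both `F` and its pointwise inverse belong to `H∞`. The outer factors of inner-outer and
spectral factorizations are of this kind. -/
structure IsHInfUnit [Fintype n] [DecidableEq n] (F : Circle → Matrix n n ℂ) : Prop where
  isUnit (z : Circle) : IsUnit (F z)
  memHInf : MemHInf F
  memHInf_inv : MemHInf fun z ↦ (F z)⁻¹

theorem IsHInfUnit.inv [Fintype n] [DecidableEq n] {F : Circle → Matrix n n ℂ}
    (hF : IsHInfUnit F) : IsHInfUnit fun z ↦ (F z)⁻¹ where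
  isUnit z := (isUnit_nonsing_inv_iff).2 (hF.isUnit z)
  memHInf := hF.memHInf_inv
  memHInf_inv := by
    simpa only [nonsing_inv_nonsing_inv _ ((isUnit_iff_isUnit_det _).1 (hF.isUnit _))]
      using hF.memHInf

theorem IsHInfUnit.mul [Fintype n] [DecidableEq n] {F G : Circle → Matrix n n ℂ}
    (hF : IsHInfUnit F) (hG : IsHInfUnit G) : IsHInfUnit fun z ↦ F z * G z where
  isUnit z := (hF.isUnit z).mul (hG.isUnit z)
  memHInf := hF.memHInf.mul hG.memHInf
  memHInf_inv := by simpa only [Matrix.mul_inv_rev] using hG.memHInf_inv.mul hF.memHInf_inv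

variable [Fintype m] [Fintype n] [DecidableEq n]

theorem distHInf_lt_iff {R : Circle → Matrix m n ℂ} {c : ℝ} :
    distHInf R < c ↔ ∃ X, MemHInf X ∧ hinfNorm (fun z ↦ R z - X z) < c := by
  rw [distHInf, csInf_lt_iff]
  · exact ⟨fun ⟨_, ⟨X, _, hX, h⟩, hc⟩ ↦ ⟨X, hX, h ▸ hc⟩,
      fun ⟨X, hX, hc⟩ ↦ ⟨_, ⟨X, hX.continuous, hX, rfl⟩, hc⟩⟩
  · exact ⟨0, by rintro _ ⟨X, -, -, rfl⟩; exact hinfNorm_nonneg _⟩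
  · exact ⟨_, 0, continuous_const, memHInf_zero, rfl⟩

theorem distHInf_lt_iff_exists_mul_mul [DecidableEq m] {A : Circle → Matrix m m ℂ}
    (hA : IsHInfUnit A) {B : Circle → Matrix n n ℂ} (hB : IsHInfUnit B)
    {R : Circle → Matrix m n ℂ} {c : ℝ} :
    distHInf R < c ↔ ∃ D : Circle → Matrix m n ℂ,
      MemHInf D ∧ hinfNorm (fun z ↦ R z - A z * D z * B z) < c := by
  rw [distHInf_lt_iff]
  refine ⟨fun ⟨X, hX, hc⟩ ↦ ⟨fun z ↦ (A z)⁻¹ * X z * (B z)⁻¹,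
    (hA.memHInf_inv.mul hX).mul hB.memHInf_inv, ?_⟩,
    fun ⟨D, hD, hc⟩ ↦ ⟨_, (hA.memHInf.mul hD).mul hB.memHInf, hc⟩⟩
  have hX_eq (z : Circle) : A z * ((A z)⁻¹ * X z * (B z)⁻¹) * B z = X z := by
    rw [Matrix.mul_assoc (A z)⁻¹,
      mul_nonsing_inv_cancel_left _ _ ((isUnit_iff_isUnit_det _).1 (hA.isUnit z)),
      nonsing_inv_mul_cancel_right _ _ ((isUnit_iff_isUnit_det _).1 (hB.isUnit z))]
  simpa only [hX_eq] using hc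

end HInf

section ModelMatching

variable {l m n k : Type*} [Fintype l] [DecidableEq l] [Fintype m] [DecidableEq m]
  [Fintype n] [DecidableEq n]

theorem specNorm_sub_mul_add_inv_smul_lt_one_iff {Vi : Matrix l n ℂ} (hVi : Vi * Viᴴ = 1)
    (B : Matrix m n ℂ) {Zo : Matrix m m ℂ} (hZo : IsUnit Zo)
    (hZo_fact : Zo * Zoᴴ = 1 - (B * (1 - Viᴴ * Vi)) * (B * (1 - Viᴴ * Vi))ᴴ)
    [Fintype k] {a : ℂ} (ha : ‖a‖ = 1) (Uo : Matrix m k ℂ) (V D : Matrix k l ℂ)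
    (Vo : Matrix l l ℂ) :
    specNorm (B - Uo * (V + a⁻¹ • D) * Vo * Vi) < 1 ↔
      specNorm (a • (Zo⁻¹ * B * Viᴴ) - Zo⁻¹ * Uo * (a • V) * Vo - Zo⁻¹ * Uo * D * Vo) < 1 := by
  have ha₀ : a ≠ 0 := norm_ne_zero_iff.1 (ha ▸ one_ne_zero)
  have hscale : a • (Zo⁻¹ * (B * Viᴴ - Uo * (V + a⁻¹ • D) * Vo)) =
      a • (Zo⁻¹ * B * Viᴴ) - Zo⁻¹ * Uo * (a • V) * Vo - Zo⁻¹ * Uo * D * Vo := by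
    simp only [Matrix.mul_sub, Matrix.mul_add, Matrix.add_mul, Matrix.mul_smul, Matrix.smul_mul,
      smul_sub, smul_add, smul_inv_smul₀ ha₀, Matrix.mul_assoc, sub_sub]
  rw [specNorm_sub_mul_lt_one_iff hVi B _ hZo hZo_fact, ← specNorm_smul_of_norm_eq_one ha, hscale]

theorem exists_forall_specNorm_lt_one_iff_distHInf_lt_one {B : Circle → Matrix m n ℂ}
    (hB : Continuous B) {Vi : Circle → Matrix l n ℂ} (hVi : Continuous Vi)
    (hVi_coinner : ∀ z, Vi z * (Vi z)ᴴ = 1) {Zo : Circle → Matrix m m ℂ} (hZo : IsHInfUnit Zo)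
    (hZo_fact : ∀ z, Zo z * (Zo z)ᴴ =
      1 - (B z * (1 - (Vi z)ᴴ * Vi z)) * (B z * (1 - (Vi z)ᴴ * Vi z))ᴴ)
    {θ : Circle → ℂ} (hθ : Continuous θ) (hθ_norm : ∀ z, ‖θ z‖ = 1)
    {Uo : Circle → Matrix m m ℂ} (hUo : IsHInfUnit Uo)
    {Vo : Circle → Matrix l l ℂ} (hVo : IsHInfUnit Vo)
    {V : Circle → Matrix m l ℂ} (hV : Continuous V) :
    (∃ D, MemHInf D ∧ ∀ z, specNorm (B z - Uo z * (V z + (θ z)⁻¹ • D z) * Vo z * Vi z) < 1) ↔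
      distHInf (fun z ↦ θ z • ((Zo z)⁻¹ * B z * (Vi z)ᴴ) -
        (Zo z)⁻¹ * Uo z * (θ z • V z) * Vo z) < 1 := by
  rw [distHInf_lt_iff_exists_mul_mul (hZo.inv.mul hUo) hVo]
  refine exists_congr fun D ↦ and_congr_right fun hD ↦ ?_
  have hD_cont := hD.continuous
  have hUo_cont := hUo.memHInf.continuous
  have hVo_cont := hVo.memHInf.continuous
  have hZo_inv_cont := hZo.memHInf_inv.continuous
  rw [hinfNorm_lt_iff (by fun_prop)]
  exact forall_congr' fun z ↦ specNorm_sub_mul_add_inv_smul_lt_one_iff (hVi_coinner z) _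
    (hZo.isUnit z) (hZo_fact z) (hθ_norm z) _ _ _ _

theorem exists_forall_specNorm_lt_one_iff_hinfNorm_and_distHInf {B : Circle → Matrix m n ℂ}
    (hB : Continuous B) {Vi : Circle → Matrix l n ℂ} (hVi : Continuous Vi)
    (hVi_coinner : ∀ z, Vi z * (Vi z)ᴴ = 1) {Z : Circle → Matrix m n ℂ}
    (hZ : ∀ z, Z z = B z * (1 - (Vi z)ᴴ * Vi z)) {Zo : Circle → Matrix m m ℂ}
    (hZo : hinfNorm Z < 1 → IsHInfUnit Zo)
    (hZo_fact : hinfNorm Z < 1 → ∀ z, Zo z * (Zo z)ᴴ = 1 - Z z * (Z z)ᴴ)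
    {θ : Circle → ℂ} (hθ : Continuous θ) (hθ_norm : ∀ z, ‖θ z‖ = 1)
    {Uo : Circle → Matrix m m ℂ} (hUo : IsHInfUnit Uo)
    {Vo : Circle → Matrix l l ℂ} (hVo : IsHInfUnit Vo)
    {V : Circle → Matrix m l ℂ} (hV : Continuous V) :
    (∃ D, MemHInf D ∧ ∀ z, specNorm (B z - Uo z * (V z + (θ z)⁻¹ • D z) * Vo z * Vi z) < 1) ↔
      hinfNorm Z < 1 ∧ distHInf (fun z ↦ θ z • ((Zo z)⁻¹ * B z * (Vi z)ᴴ) -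
        (Zo z)⁻¹ * Uo z * (θ z • V z) * Vo z) < 1 := by
  obtain rfl : Z = fun z ↦ B z * (1 - (Vi z)ᴴ * Vi z) := funext hZ
  have hlevel (hZ_lt : hinfNorm _ < 1) := exists_forall_specNorm_lt_one_iff_distHInf_lt_one hB hVi
    hVi_coinner (hZo hZ_lt) (hZo_fact hZ_lt) hθ hθ_norm hUo hVo hV
  refine ⟨fun ⟨D, hD, hlt⟩ ↦ ?_, fun ⟨hZ_lt, hdist⟩ ↦ (hlevel hZ_lt).2 hdist⟩
  have hZ_lt : hinfNorm (fun z ↦ B z * (1 - (Vi z)ᴴ * Vi z)) < 1 :=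
    (hinfNorm_lt_iff (by fun_prop)).2 fun z ↦
      (specNorm_mul_one_sub_le (hVi_coinner z) _ _).trans_lt (hlt z)
  exact ⟨hZ_lt, (hlevel hZ_lt).1 ⟨D, hD, hlt⟩⟩

theorem exists_hinfNorm_sub_mul_mul_lt_iff [Fintype k] [DecidableEq k]
    {T : Circle → Matrix k n ℂ} (hT : Continuous T)
    {S : Circle → Matrix l n ℂ} (hS : Continuous S)
    {Ui : Circle → Matrix k m ℂ} (hUi : Continuous Ui) (hUi_inner : ∀ z, (Ui z)ᴴ * Ui z = 1)
    {Uo : Circle → Matrix m m ℂ} (hUo : IsHInfUnit Uo) {γ : ℝ}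
    {Y : Circle → Matrix k n ℂ} (hY : ∀ z, Y z = (1 - Ui z * (Ui z)ᴴ) * T z)
    {Yo : Circle → Matrix n n ℂ} (hYo : hinfNorm Y < γ → Continuous Yo)
    (hYo_unit : hinfNorm Y < γ → ∀ z, IsUnit (Yo z))
    (hYo_fact : hinfNorm Y < γ → ∀ z,
      (Yo z)ᴴ * Yo z = ((γ : ℂ) ^ 2) • (1 : Matrix n n ℂ) - (Y z)ᴴ * Y z)
    {Vi : Circle → Matrix l n ℂ} (hVi : hinfNorm Y < γ → Continuous Vi)
    (hVi_coinner : hinfNorm Y < γ → ∀ z, Vi z * (Vi z)ᴴ = 1)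
    {Vo : Circle → Matrix l l ℂ} (hVo : hinfNorm Y < γ → IsHInfUnit Vo)
    (hS_fact : hinfNorm Y < γ → ∀ z, S z * (Yo z)⁻¹ = Vo z * Vi z)
    {Z : Circle → Matrix m n ℂ}
    (hZ : ∀ z, Z z = (Ui z)ᴴ * T z * (Yo z)⁻¹ * (1 - (Vi z)ᴴ * Vi z))
    {Zo : Circle → Matrix m m ℂ} (hZo : hinfNorm Y < γ → hinfNorm Z < 1 → IsHInfUnit Zo)
    (hZo_fact : hinfNorm Y < γ → hinfNorm Z < 1 → ∀ z, Zo z * (Zo z)ᴴ = 1 - Z z * (Z z)ᴴ)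
    {θ : Circle → ℂ} (hθ : Continuous θ) (hθ_norm : ∀ z, ‖θ z‖ = 1)
    {V : Circle → Matrix m l ℂ} (hV : Continuous V) :
    (∃ D, MemHInf D ∧
        hinfNorm (fun z ↦ T z - Ui z * Uo z * (V z + (θ z)⁻¹ • D z) * S z) < γ) ↔
      hinfNorm Y < γ ∧ hinfNorm Z < 1 ∧
        distHInf (fun z ↦ θ z • ((Zo z)⁻¹ * (Ui z)ᴴ * T z * (Yo z)⁻¹ * (Vi z)ᴴ) -
          (Zo z)⁻¹ * Uo z * (θ z • V z) * Vo z) < 1 := by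
  have hE {D : Circle → Matrix m l ℂ} (hD : MemHInf D) :
      Continuous fun z ↦ T z - Ui z * Uo z * (V z + (θ z)⁻¹ • D z) * S z := by
    have hθ_ne (z : Circle) : θ z ≠ 0 := norm_ne_zero_iff.1 (hθ_norm z ▸ one_ne_zero)
    have hUo_cont := hUo.memHInf.continuous
    have hD_cont := hD.continuous
    fun_prop (disch := assumption)
  have hY_le {D : Circle → Matrix m l ℂ} (hD : MemHInf D) :
      hinfNorm Y ≤ hinfNorm fun z ↦ T z - Ui z * Uo z * (V z + (θ z)⁻¹ • D z) * S z := by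
    refine hinfNorm_mono (hE hD) fun z ↦ ?_
    rw [hY, Matrix.mul_assoc (Ui z), Matrix.mul_assoc (Ui z)]
    exact specNorm_one_sub_mul_le (hUi_inner z) _ _
  suffices hlevel : hinfNorm Y < γ → ((∃ D, MemHInf D ∧
      hinfNorm (fun z ↦ T z - Ui z * Uo z * (V z + (θ z)⁻¹ • D z) * S z) < γ) ↔ _) from
    ⟨fun ⟨D, hD, hlt⟩ ↦
      have hγ := (hY_le hD).trans_lt hlt
      ⟨hγ, (hlevel hγ).1 ⟨D, hD, hlt⟩⟩, fun ⟨hγ, h⟩ ↦ (hlevel hγ).2 h⟩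
  intro hγ
  have hYo_inv := continuous_matrix_inv (hYo hγ) (hYo_unit hγ)
  have hB : Continuous fun z ↦ (Ui z)ᴴ * T z * (Yo z)⁻¹ := by fun_prop
  have hmodel := exists_forall_specNorm_lt_one_iff_hinfNorm_and_distHInf hB (hVi hγ)
    (hVi_coinner hγ) hZ (hZo hγ) (hZo_fact hγ) hθ hθ_norm hUo (hVo hγ) hV
  simp only [← Matrix.mul_assoc] at hmodel
  rw [← hmodel]
  refine exists_congr fun D ↦ and_congr_right fun hD ↦ ?_
  rw [hinfNorm_lt_iff (hE hD)]
  refine forall_congr' fun z ↦ ?_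
  rw [Matrix.mul_assoc (Ui z)]
  exact specNorm_sub_mul_mul_lt_iff (hUi_inner z) _ ((hinfNorm_nonneg _).trans_lt hγ)
    (hYo_unit hγ z) (by rw [hYo_fact hγ z, hY]) (hS_fact hγ z) _

end ModelMatching

theorem distributed_hinf_general_optimal_general {q₁ q₂ p₁ p₂ : Type*} [Fintype q₁]
    [DecidableEq q₁] [Fintype q₂] [DecidableEq q₂] [Fintype p₁] [DecidableEq p₁] [Fintype p₂]
    [DecidableEq p₂] (𝒱 : Set (Circle → Matrix p₂ q₂ ℂ)) (h𝒱 : 𝒱.Nonempty)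
    (h𝒱_cont : ∀ V ∈ 𝒱, Continuous V)
    (θ : Circle → ℂ) (hθ : Continuous θ) (hθ_norm : ∀ z, ‖θ z‖ = 1)
    (T1 : Circle → Matrix q₁ p₁ ℂ) (hT1 : Continuous T1)
    (T2 : Circle → Matrix q₁ p₂ ℂ)
    (T3 : Circle → Matrix q₂ p₁ ℂ) (hT3 : Continuous T3)
    (Ui : Circle → Matrix q₁ p₂ ℂ) (hUi : Continuous Ui) (hUi_inner : ∀ z, (Ui z)ᴴ * Ui z = 1)
    (Uo : Circle → Matrix p₂ p₂ ℂ) (hUo : IsHInfUnit Uo) (hT2_fact : ∀ z, T2 z = Ui z * Uo z)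
    (Y : Circle → Matrix q₁ p₁ ℂ) (hY : Y = fun z ↦ (1 - Ui z * (Ui z)ᴴ) * T1 z)
    (Yo : ℝ → Circle → Matrix p₁ p₁ ℂ)
    (hYo : ∀ γ, hinfNorm Y < γ → Continuous (Yo γ))
    (hYo_unit : ∀ γ, hinfNorm Y < γ → ∀ z, IsUnit (Yo γ z))
    (hYo_fact : ∀ γ, hinfNorm Y < γ → ∀ z, (Yo γ z)ᴴ * Yo γ z =
      ((γ : ℂ) ^ 2) • (1 : Matrix p₁ p₁ ℂ) - (Y z)ᴴ * Y z)
    (Vci : ℝ → Circle → Matrix q₂ p₁ ℂ)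
    (hVci : ∀ γ, hinfNorm Y < γ → Continuous (Vci γ))
    (hVci_coinner : ∀ γ, hinfNorm Y < γ → ∀ z, Vci γ z * (Vci γ z)ᴴ = 1)
    (Vco : ℝ → Circle → Matrix q₂ q₂ ℂ) (hVco : ∀ γ, hinfNorm Y < γ → IsHInfUnit (Vco γ))
    (hT3_fact : ∀ γ, hinfNorm Y < γ → ∀ z, T3 z * (Yo γ z)⁻¹ = Vco γ z * Vci γ z)
    (Z : ℝ → Circle → Matrix p₂ p₁ ℂ)
    (hZ : Z = fun γ z ↦ (Ui z)ᴴ * T1 z * (Yo γ z)⁻¹ * (1 - (Vci γ z)ᴴ * Vci γ z))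
    (Zco : ℝ → Circle → Matrix p₂ p₂ ℂ)
    (hZco : ∀ γ, hinfNorm Y < γ → hinfNorm (Z γ) < 1 → IsHInfUnit (Zco γ))
    (hZco_fact : ∀ γ, hinfNorm Y < γ → hinfNorm (Z γ) < 1 → ∀ z,
      Zco γ z * (Zco γ z)ᴴ = 1 - Z γ z * (Z γ z)ᴴ) :
    sInf {c : ℝ | ∃ V ∈ 𝒱, ∃ D : Circle → Matrix p₂ q₂ ℂ, Continuous D ∧ MemHInf D ∧
        c = hinfNorm fun z ↦ T1 z - T2 z * (V z + (θ z)⁻¹ • D z) * T3 z} =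
      sInf {γ : ℝ | hinfNorm Y < γ ∧ hinfNorm (Z γ) < 1 ∧ ∃ V ∈ 𝒱,
        distHInf (fun z ↦ θ z • ((Zco γ z)⁻¹ * (Ui z)ᴴ * T1 z * (Yo γ z)⁻¹ * (Vci γ z)ᴴ) -
          (Zco γ z)⁻¹ * Uo z * (θ z • V z) * Vco γ z) < 1} := by
  set costs := {c : ℝ | ∃ V ∈ 𝒱, ∃ D : Circle → Matrix p₂ q₂ ℂ, Continuous D ∧ MemHInf D ∧
    c = hinfNorm fun z ↦ T1 z - T2 z * (V z + (θ z)⁻¹ • D z) * T3 z}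
  have hcosts : costs.Nonempty :=
    h𝒱.imp' _ fun V hV ↦ ⟨V, hV, 0, continuous_const, memHInf_zero, rfl⟩
  have hcosts_bdd : BddBelow costs :=
    ⟨0, by rintro _ ⟨V, -, D, -, -, rfl⟩; exact hinfNorm_nonneg _⟩
  rw [← csInf_setOf_exists_mem_lt hcosts hcosts_bdd]
  congr 1 with γ
  have hexists : (∃ c ∈ costs, c < γ) ↔ ∃ V ∈ 𝒱, ∃ D, MemHInf D ∧
      hinfNorm (fun z ↦ T1 z - Ui z * Uo z * (V z + (θ z)⁻¹ • D z) * T3 z) < γ := by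
    simp only [← hT2_fact]
    exact ⟨fun ⟨_, ⟨V, hV, D, _, hD, hc⟩, hlt⟩ ↦ ⟨V, hV, D, hD, hc ▸ hlt⟩,
      fun ⟨V, hV, D, hD, hlt⟩ ↦ ⟨_, ⟨V, hV, D, hD.continuous, hD, rfl⟩, hlt⟩⟩
  have hlevel (V) (hV : V ∈ 𝒱) := exists_hinfNorm_sub_mul_mul_lt_iff hT1 hT3 hUi hUi_inner hUo
    (congrFun hY) (hYo γ) (hYo_unit γ) (hYo_fact γ) (hVci γ) (hVci_coinner γ) (hVco γ)
    (hT3_fact γ) (congrFun (congrFun hZ γ)) (hZco γ) (hZco_fact γ) hθ hθ_norm (h𝒱_cont V hV)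
  rw [Set.mem_ofPred_eq, Set.mem_ofPred_eq, hexists]
  constructor
  · rintro ⟨V, hV, h⟩
    obtain ⟨hγ, hZ_lt, hdist⟩ := (hlevel V hV).1 h
    exact ⟨hγ, hZ_lt, V, hV, hdist⟩
  · rintro ⟨hγ, hZ_lt, V, hV, hdist⟩
    exact ⟨V, hV, (hlevel V hV).2 ⟨hγ, hZ_lt, hdist⟩⟩

/-- The matrix Laurent polynomial `∑ i, z⁻ⁱ Vᵢ` on the unit circle: a controller whose first `N`
impulse response coefficients, read along powers of the delay `z⁻¹`, are the `Vᵢ`. -/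
noncomputable def firMatrix {N : ℕ} {m n : Type*} (V : Fin N → Matrix m n ℂ) (z : Circle) :
    Matrix m n ℂ :=
  ∑ i : Fin N, ((z : ℂ)⁻¹) ^ (i : ℕ) • V i

theorem continuous_firMatrix {N : ℕ} {m n : Type*} (V : Fin N → Matrix m n ℂ) :
    Continuous (firMatrix V) := by
  have hinv := continuous_inv_coe_circle
  unfold firMatrix
  fun_prop

/-- Distributed H∞ control subject to delays, general `T3` case (Theorem 4, part 1):
`inf { ‖T1 − T2 (V + z^{−N} D) T3‖∞ : V_i ∈ 𝒴_i, D ∈ H∞ }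
  = inf { γ : γ > ‖Y‖∞, ‖Z_γ‖∞ < 1, ∃ V_i ∈ 𝒴_i with dist(R̂_γ(V), H∞) < 1 }`. -/
theorem distributed_hinf_general_optimal (N : ℕ) (hN : 1 ≤ N) (q1 q2 p1 p2 : ℕ)
    (𝒴 : Fin N → Submodule ℂ (Matrix (Fin p2) (Fin q2) ℂ))
    (T1 : Circle → Matrix (Fin q1) (Fin p1) ℂ) (hT1 : Continuous T1)
    (T2 : Circle → Matrix (Fin q1) (Fin p2) ℂ) (hT2 : Continuous T2)
    (T3 : Circle → Matrix (Fin q2) (Fin p1) ℂ) (hT3 : Continuous T3)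
    (Ui : Circle → Matrix (Fin q1) (Fin p2) ℂ) (hUic : Continuous Ui)
    (hUiInner : ∀ z, (Ui z)ᴴ * Ui z = 1) (hUiH : MemHInf Ui)
    (Uo : Circle → Matrix (Fin p2) (Fin p2) ℂ) (hUoc : Continuous Uo)
    (hUoH : MemHInf Uo) (hUoUnit : ∀ z, IsUnit (Uo z))
    (hUoInvH : MemHInf fun z => (Uo z)⁻¹)
    (hT2fact : ∀ z, T2 z = Ui z * Uo z)
    (Y : Circle → Matrix (Fin q1) (Fin p1) ℂ)
    (hY : Y = fun z => (1 - Ui z * (Ui z)ᴴ) * T1 z)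
    (Yo : ℝ → Circle → Matrix (Fin p1) (Fin p1) ℂ)
    (hYoc : ∀ γ, hinfNorm Y < γ → Continuous (Yo γ))
    (hYoUnit : ∀ γ, hinfNorm Y < γ → ∀ z, IsUnit (Yo γ z))
    (hYoH : ∀ γ, hinfNorm Y < γ → MemHInf (Yo γ))
    (hYoInvH : ∀ γ, hinfNorm Y < γ → MemHInf fun z => (Yo γ z)⁻¹)
    (hYofact : ∀ γ, hinfNorm Y < γ → ∀ z, (Yo γ z)ᴴ * Yo γ z
      = ((γ : ℂ) ^ 2) • (1 : Matrix (Fin p1) (Fin p1) ℂ) - (Y z)ᴴ * Y z)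
    (Vci : ℝ → Circle → Matrix (Fin q2) (Fin p1) ℂ)
    (hVcic : ∀ γ, hinfNorm Y < γ → Continuous (Vci γ))
    (hVciH : ∀ γ, hinfNorm Y < γ → MemHInf (Vci γ))
    (hVciCoInner : ∀ γ, hinfNorm Y < γ → ∀ z, Vci γ z * (Vci γ z)ᴴ = 1)
    (Vco : ℝ → Circle → Matrix (Fin q2) (Fin q2) ℂ)
    (hVcoc : ∀ γ, hinfNorm Y < γ → Continuous (Vco γ))
    (hVcoH : ∀ γ, hinfNorm Y < γ → MemHInf (Vco γ))
    (hVcoUnit : ∀ γ, hinfNorm Y < γ → ∀ z, IsUnit (Vco γ z))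
    (hVcoInvH : ∀ γ, hinfNorm Y < γ → MemHInf fun z => (Vco γ z)⁻¹)
    (hT3fact : ∀ γ, hinfNorm Y < γ → ∀ z, T3 z * (Yo γ z)⁻¹ = Vco γ z * Vci γ z)
    (Z : ℝ → Circle → Matrix (Fin p2) (Fin p1) ℂ)
    (hZ : Z = fun γ z => (Ui z)ᴴ * T1 z * (Yo γ z)⁻¹ * (1 - (Vci γ z)ᴴ * Vci γ z))
    (Zco : ℝ → Circle → Matrix (Fin p2) (Fin p2) ℂ)
    (hZcoc : ∀ γ, hinfNorm Y < γ → hinfNorm (Z γ) < 1 → Continuous (Zco γ))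
    (hZcoUnit : ∀ γ, hinfNorm Y < γ → hinfNorm (Z γ) < 1 → ∀ z, IsUnit (Zco γ z))
    (hZcoH : ∀ γ, hinfNorm Y < γ → hinfNorm (Z γ) < 1 → MemHInf (Zco γ))
    (hZcoInvH : ∀ γ, hinfNorm Y < γ → hinfNorm (Z γ) < 1 →
      MemHInf fun z => (Zco γ z)⁻¹)
    (hZcofact : ∀ γ, hinfNorm Y < γ → hinfNorm (Z γ) < 1 → ∀ z, Zco γ z * (Zco γ z)ᴴ
      = (1 : Matrix (Fin p2) (Fin p2) ℂ) - Z γ z * (Z γ z)ᴴ)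
    (R : ℝ → Circle → Matrix (Fin p2) (Fin q2) ℂ)
    (hR : R = fun γ z => (Zco γ z)⁻¹ * (Ui z)ᴴ * T1 z * (Yo γ z)⁻¹ * (Vci γ z)ᴴ)
    (Rhat : ℝ → (Fin N → Matrix (Fin p2) (Fin q2) ℂ) →
      Circle → Matrix (Fin p2) (Fin q2) ℂ)
    (hRhat : Rhat = fun γ V (z : Circle) =>
      ((z : ℂ) ^ N) • R γ z
        - (Zco γ z)⁻¹ * Uo z
            * (((z : ℂ) ^ N) • ∑ i : Fin N, ((z : ℂ)⁻¹) ^ (i : ℕ) • V i)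
            * Vco γ z) :
    sInf {c : ℝ | ∃ V : Fin N → Matrix (Fin p2) (Fin q2) ℂ, (∀ i, V i ∈ 𝒴 i) ∧
        ∃ D : Circle → Matrix (Fin p2) (Fin q2) ℂ, Continuous D ∧ MemHInf D ∧
          c = hinfNorm fun z : Circle =>
            T1 z - T2 z * ((∑ i : Fin N, ((z : ℂ)⁻¹) ^ (i : ℕ) • V i)
              + ((z : ℂ)⁻¹ ^ N) • D z) * T3 z}
      = sInf {γ : ℝ | hinfNorm Y < γ ∧ hinfNorm (Z γ) < 1 ∧
          ∃ V : Fin N → Matrix (Fin p2) (Fin q2) ℂ, (∀ i, V i ∈ 𝒴 i) ∧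
            distHInf (Rhat γ V) < 1} := by
  subst hR hRhat
  have h := distributed_hinf_general_optimal_general (firMatrix '' {V | ∀ i, V i ∈ 𝒴 i})
    (Set.Nonempty.image _ ⟨0, fun i ↦ (𝒴 i).zero_mem⟩)
    (Set.forall_mem_image.2 fun V _ ↦ continuous_firMatrix V)
    (fun z : Circle ↦ (z : ℂ) ^ N) (by fun_prop) (by simp [Circle.norm_coe])
    T1 hT1 T2 T3 hT3 Ui hUic hUiInner Uo ⟨hUoUnit, hUoH, hUoInvH⟩ hT2fact Y hY
    Yo hYoc hYoUnit hYofact Vci hVcic hVciCoInner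
    Vco (fun γ hγ ↦ ⟨hVcoUnit γ hγ, hVcoH γ hγ, hVcoInvH γ hγ⟩) hT3fact Z hZ
    Zco (fun γ hγ hγZ ↦ ⟨hZcoUnit γ hγ hγZ, hZcoH γ hγ hγZ, hZcoInvH γ hγ hγZ⟩) hZcofact
  simpa only [Set.exists_mem_image, Set.mem_ofPred_eq, inv_pow, firMatrix] using h
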